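/- Let 1 ≤ d ≤ 4 and m = binomial(d,2). Every nonnegative biquadratic form in d+d variables vanishing on the diagonal is a sum of squares of polynomials. Equivalently, for every c : ℝ^d → S^d with homogeneous degree-2 polynomial entries such that c(x) is positive semidefinite for all x and c(x)x = 0 for all x, there exist skew-symmetric matrices A_1, …, A_m ∈ ℝ^{d×d} with c(x) = Σ_{p=1}^m A_p x x^⊤ A_p^⊤ for all x ∈ ℝ^d. -/

import Mathlib

open Matrix

/-- A function `ℝ^d → ℝ` is (the evaluation of) a homogeneous polynomial of degree `k`. -/
def IsHomPolyFun (d k : ℕ) (f : (Fin d → ℝ) → ℝ) : Prop :=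
  ∃ P : MvPolynomial (Fin d) ℝ, P.IsHomogeneous k ∧ ∀ x, f x = MvPolynomial.eval x P

namespace BQF

def IsQ (d : ℕ) (f : (Fin d → ℝ) → ℝ) : Prop :=
  ∃ M : Matrix (Fin d) (Fin d) ℝ, ∀ x, f x = x ⬝ᵥ M.mulVec x

theorem IsQ.add {d} {f g : (Fin d → ℝ) → ℝ} (hf : IsQ d f) (hg : IsQ d g) :
    IsQ d (fun x => f x + g x) := by
  obtain ⟨M, hM⟩ := hf
  obtain ⟨N, hN⟩ := hg
  exact ⟨M + N, fun x => by simp only [hM, hN]; rw [Matrix.add_mulVec, dotProduct_add]⟩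

theorem IsQ.smul {d} {f : (Fin d → ℝ) → ℝ} (r : ℝ) (hf : IsQ d f) :
    IsQ d (fun x => r * f x) := by
  obtain ⟨M, hM⟩ := hf
  exact ⟨r • M, fun x => by simp only [hM]; rw [Matrix.smul_mulVec, dotProduct_smul, smul_eq_mul]⟩

theorem IsQ.mul {d} (i j : Fin d) : IsQ d (fun x => x i * x j) := by
  refine ⟨Matrix.single i j 1, fun x => ?_⟩
  simp [Matrix.single_mulVec, dotProduct, Function.update_apply]

theorem isQ_sum {d} {ι : Type*} (s : Finset ι) (f : ι → (Fin d → ℝ) → ℝ)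
    (h : ∀ a ∈ s, IsQ d (f a)) : IsQ d (fun x => ∑ a ∈ s, f a x) := by
  classical
  induction s using Finset.induction_on with
  | empty => exact ⟨0, fun x => by simp⟩
  | insert a s ha ih =>
    simp only [Finset.sum_insert ha]
    exact (h a (by simp)).add (ih fun b hb => h b (by simp [hb]))

theorem isQ_of_hom {d} {f : (Fin d → ℝ) → ℝ} (h : IsHomPolyFun d 2 f) : IsQ d f := by
  obtain ⟨P, hP, hf⟩ := h
  have : f = fun x => ∑ m ∈ P.support, P.coeff m * ∏ i, x i ^ m i := by
    funext x
    rw [hf, MvPolynomial.eval_eq']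
  rw [this]
  refine isQ_sum _ _ fun m hm => IsQ.smul _ ?_
  have hdeg : m.degree = 2 := by
    have := hP (MvPolynomial.mem_support_iff.1 hm)
    rw [Finsupp.degree_eq_weight_one]
    exact this
  have hm0 : m ≠ 0 := by rintro rfl; simp at hdeg
  obtain ⟨i, hi⟩ : ∃ i, m i ≠ 0 := by
    by_contra! hc
    exact hm0 (Finsupp.ext hc)
  obtain ⟨m', rfl⟩ : ∃ m', m = Finsupp.single i 1 + m' :=
    ⟨m - Finsupp.single i 1, by
      rw [add_tsub_cancel_of_le]
      simpa [Nat.one_le_iff_ne_zero] using hi⟩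
  have hdeg' : m'.degree = 1 := by
    simp only [map_add, Finsupp.degree_single] at hdeg
    omega
  obtain ⟨j, rfl⟩ : ∃ j, m' = Finsupp.single j 1 := by
    have hh : m' ∈ Set.range (fun a : Fin d => Finsupp.single a 1) := by
      rw [Finsupp.range_single_one]; exact hdeg'
    obtain ⟨j, hj⟩ := hh
    exact ⟨j, hj.symm⟩
  have : (fun x : Fin d → ℝ => ∏ k, x k ^ ((Finsupp.single i 1 + Finsupp.single j 1 : Fin d →₀ ℕ) k))
      = fun x => x i * x j := by
    funext x
    simp only [Finsupp.add_apply, pow_add, Finset.prod_mul_distrib]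
    simp [Finsupp.single_apply, pow_ite]
  rw [this]
  exact IsQ.mul i j

/-- the S-lemma (equality version) -/
theorem slemma {V : Type*} [AddCommGroup V] [Module ℝ V] (p q : V → ℝ) (bp bq : V → V → ℝ)
    (hp : ∀ u v t, p (u + t • v) = p u + t * bp u v + t ^ 2 * p v)
    (hq : ∀ u v t, q (u + t • v) = q u + t * bq u v + t ^ 2 * q v)
    (h : ∀ u, p u = 0 → 0 ≤ q u) (u₀ v₀ : V) (hu₀ : 0 < p u₀) (hv₀ : p v₀ < 0) :
    ∃ l : ℝ, ∀ w, 0 ≤ q w + l * p w := by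
  have key : ∀ u v, 0 < p u → p v < 0 → q v / p v ≤ q u / p u := by
    intro u v hu hv
    set b := bp u v with hb
    have hD : 0 < b ^ 2 - 4 * p u * p v := by nlinarith [mul_pos hu (neg_pos.2 hv), sq_nonneg b]
    set s := Real.sqrt (b ^ 2 - 4 * p u * p v) with hs
    have hs2 : s ^ 2 = b ^ 2 - 4 * p u * p v := Real.sq_sqrt hD.le
    have hs0 : 0 < s := Real.sqrt_pos.2 hD
    have hbs : b ^ 2 < s ^ 2 := by nlinarith [mul_pos hu (neg_pos.2 hv)]
    have habs := abs_lt_of_sq_lt_sq hbs hs0.le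
    obtain ⟨h1, h2⟩ := abs_lt.1 habs
    have hv' : p v ≠ 0 := hv.ne
    have r1 := h (u + ((-b + s) / (2 * p v)) • v) (by
      rw [hp, ← hb]; field_simp; linear_combination hs2)
    have r2 := h (u + ((-b - s) / (2 * p v)) • v) (by
      rw [hp, ← hb]; field_simp; linear_combination hs2)
    rw [hq] at r1 r2
    have e1 : 0 ≤ (b + s) * (q u + (-b + s) / (2 * p v) * bq u v + ((-b + s) / (2 * p v)) ^ 2 * q v)
       + (s - b) * (q u + (-b - s) / (2 * p v) * bq u v + ((-b - s) / (2 * p v)) ^ 2 * q v) :=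
      add_nonneg (mul_nonneg (by linarith) r1) (mul_nonneg (by linarith) r2)
    have e2 : (b + s) * (q u + (-b + s) / (2 * p v) * bq u v + ((-b + s) / (2 * p v)) ^ 2 * q v)
       + (s - b) * (q u + (-b - s) / (2 * p v) * bq u v + ((-b - s) / (2 * p v)) ^ 2 * q v)
       = 2 * s * p u * (q u / p u - q v / p v) := by
      field_simp
      linear_combination (2 * s * q v) * hs2
    rw [e2] at e1
    have := nonneg_of_mul_nonneg_right e1 (by positivity)
    linarith
  set S : Set ℝ := {r | ∃ v, p v < 0 ∧ r = q v / p v}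
  have hS : S.Nonempty := ⟨_, v₀, hv₀, rfl⟩
  have hB : BddAbove S := ⟨q u₀ / p u₀, by rintro _ ⟨v, hv, rfl⟩; exact key _ _ hu₀ hv⟩
  refine ⟨-sSup S, fun w => ?_⟩
  rcases lt_trichotomy (p w) 0 with hw | hw | hw
  · have : q w / p w ≤ sSup S := le_csSup hB ⟨w, hw, rfl⟩
    rw [div_le_iff_of_neg hw] at this
    linarith
  · simpa [hw] using h w hw
  · have : sSup S ≤ q w / p w := csSup_le hS (by rintro _ ⟨v, hv, rfl⟩; exact key _ _ hw hv)
    rw [le_div_iff₀ hw] at this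
    linarith

abbrev I (d : ℕ) := {p : Fin d × Fin d // p.1 < p.2}

def plu {d} (x y : Fin d → ℝ) : I d → ℝ := fun p => x p.1.1 * y p.1.2 - x p.1.2 * y p.1.1

def sk {d} (w : I d → ℝ) (i j : Fin d) : ℝ :=
  if h : i < j then w ⟨(i, j), h⟩ else if h : j < i then - w ⟨(j, i), h⟩ else 0

theorem sk_skew {d} (w : I d → ℝ) (i j : Fin d) : sk w i j = - sk w j i := by
  unfold sk
  rcases lt_trichotomy i j with h | h | h
  · simp [h, h.asymm]
  · simp [h]
  · simp [h, h.asymm]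

theorem sk_sub {d} (w : I d → ℝ) (p : I d) : sk w p.1.1 p.1.2 = w p := by
  unfold sk
  rw [dif_pos p.2]

theorem decomp {d} (w : I d → ℝ) (h : ∀ a b k l, sk w a b * sk w k l - sk w a k * sk w b l
    + sk w a l * sk w b k = 0) : ∃ x y, w = plu x y := by
  by_cases h0 : ∃ a b, sk w a b ≠ 0
  · obtain ⟨a, b, hab⟩ := h0
    refine ⟨fun k => sk w k b / sk w a b, fun k => sk w a k, ?_⟩
    funext p
    rw [← sk_sub w p]
    have := h a b p.1.1 p.1.2
    rw [sk_skew w b, sk_skew w b] at this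
    simp only [plu]
    field_simp
    linear_combination this
  · push Not at h0
    refine ⟨0, 0, ?_⟩
    funext p
    rw [← sk_sub w p, h0]
    simp [plu]

theorem antisum {d} (a : Fin d → Fin d → ℝ) (ha : ∀ i j, a i j = - a j i) (x y : Fin d → ℝ) :
    ∑ i, ∑ j, a i j * (x i * y j) = ∑ p : I d, a p.1.1 p.1.2 * plu x y p := by
  have h1 : ∑ p : I d, a p.1.1 p.1.2 * plu x y p =
      ∑ i, ∑ j, if i < j then a i j * (x i * y j - x j * y i) else 0 := by
    rw [← Finset.sum_product', ← Finset.sum_filter]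
    exact (Finset.sum_subtype _ (by simp) (fun p : Fin d × Fin d => a p.1 p.2 * (x p.1 * y p.2 - x p.2 * y p.1))).symm
  have h2 : ∑ i, ∑ j, (if i < j then a i j * (x i * y j - x j * y i) else 0) =
      ∑ i, ∑ j, (if i < j then a i j * (x i * y j) else 0) +
      ∑ i, ∑ j, (if j < i then a i j * (x i * y j) else 0) := by
    rw [Finset.sum_comm (f := fun i j => if j < i then a i j * (x i * y j) else 0),
      ← Finset.sum_add_distrib]
    refine Finset.sum_congr rfl fun i _ => ?_
    rw [← Finset.sum_add_distrib]
    refine Finset.sum_congr rfl fun j _ => ?_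
    rw [ha j i]
    split_ifs <;> ring
  rw [h1, h2, ← Finset.sum_add_distrib]
  refine Finset.sum_congr rfl fun i _ => ?_
  rw [← Finset.sum_add_distrib]
  refine Finset.sum_congr rfl fun j _ => ?_
  have hd : a i i = 0 := by linarith [ha i i]
  rcases lt_trichotomy i j with h | h | h
  · simp [h, h.asymm]
  · subst h; simp [hd]
  · simp [h, h.asymm]

theorem card_I (d : ℕ) (hd4 : d ≤ 4) : Fintype.card (I d) = d.choose 2 := by
  interval_cases d <;> decide

theorem quad_expand {ι : Type*} [Fintype ι] (M : Matrix ι ι ℝ) (u v : ι → ℝ) (t : ℝ) :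
    (u + t • v) ⬝ᵥ M.mulVec (u + t • v) = u ⬝ᵥ M.mulVec u
      + t * (u ⬝ᵥ M.mulVec v + v ⬝ᵥ M.mulVec u) + t ^ 2 * (v ⬝ᵥ M.mulVec v) := by
  simp only [Matrix.mulVec_add, Matrix.mulVec_smul, dotProduct_add, add_dotProduct,
    dotProduct_smul, smul_dotProduct, smul_eq_mul]
  ring

theorem lift_small {d} (hd : d ≤ 3) (w : I d → ℝ) : ∃ x y, w = plu x y := by
  apply decomp
  have hs := sk_skew w
  have h0 : ∀ i, sk w i i = 0 := fun i => by linarith [hs i i]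
  intro a b k l
  have : a = b ∨ a = k ∨ a = l ∨ b = k ∨ b = l ∨ k = l := by omega
  rcases this with rfl | rfl | rfl | rfl | rfl | rfl
  · rw [h0]; ring
  · rw [h0, hs b a]; ring
  · rw [h0, hs b a, hs b k, hs k a]; ring
  · rw [h0]; ring
  · rw [h0, hs k b]; ring
  · rw [h0]; ring

def PM : Matrix (I 4) (I 4) ℝ := fun p q =>
  (if p.1 = (0, 1) ∧ q.1 = (2, 3) then 1 else 0) - (if p.1 = (0, 2) ∧ q.1 = (1, 3) then 1 else 0)
   + (if p.1 = (0, 3) ∧ q.1 = (1, 2) then 1 else 0)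

theorem PM_eval (w : I 4 → ℝ) : w ⬝ᵥ PM.mulVec w =
    sk w 0 1 * sk w 2 3 - sk w 0 2 * sk w 1 3 + sk w 0 3 * sk w 1 2 := by
  have hs : ∀ (a b : Fin 4) (h : a < b) (c : ℝ), (∑ q : I 4, if q.1 = (a, b) then c * w q else 0) = c * sk w a b := by
    intro a b h c
    have : ∀ q : I 4, (q.1 = (a, b)) ↔ q = ⟨(a, b), h⟩ := fun q => by rw [Subtype.ext_iff]
    simp only [this, Finset.sum_ite_eq', Finset.mem_univ, if_true, sk, dif_pos h]
  have : w ⬝ᵥ PM.mulVec w = ∑ p : I 4, ∑ q : I 4,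
      ((if p.1 = (0, 1) then if q.1 = (2, 3) then w p * w q else 0 else 0)
      - (if p.1 = (0, 2) then if q.1 = (1, 3) then w p * w q else 0 else 0)
      + (if p.1 = (0, 3) then if q.1 = (1, 2) then w p * w q else 0 else 0)) := by
    simp only [dotProduct, Matrix.mulVec, PM, Finset.mul_sum]
    refine Finset.sum_congr rfl fun p _ => Finset.sum_congr rfl fun q _ => ?_
    simp only [ite_and]
    split_ifs <;> ring
  rw [this]
  have h2 : ∀ (a b c e : Fin 4) (h : a < b) (h' : c < e), (∑ p : I 4, ∑ q : I 4,
      if p.1 = (a, b) then if q.1 = (c, e) then w p * w q else 0 else 0) = sk w a b * sk w c e := by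
    intro a b c e h h'
    have : ∀ p : I 4, (∑ q : I 4, if p.1 = (a, b) then if q.1 = (c, e) then w p * w q else 0 else 0)
      = if p.1 = (a, b) then sk w c e * w p else 0 := by
      intro p
      split_ifs
      · rw [hs c e h', mul_comm]
      · simp
    simp only [this]
    rw [hs a b h, mul_comm]
  simp only [Finset.sum_add_distrib, Finset.sum_sub_distrib]
  rw [h2 _ _ _ _ (by decide) (by decide), h2 _ _ _ _ (by decide) (by decide),
    h2 _ _ _ _ (by decide) (by decide)]

theorem lift_four (w : I 4 → ℝ) (hw : w ⬝ᵥ PM.mulVec w = 0) : ∃ x y, w = plu x y := by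
  apply decomp
  rw [PM_eval] at hw
  have hs := sk_skew w
  have h0 : ∀ i, sk w i i = 0 := fun i => by linarith [hs i i]
  have h10 := hs 1 0
  have h20 := hs 2 0
  have h30 := hs 3 0
  have h21 := hs 2 1
  have h31 := hs 3 1
  have h32 := hs 3 2
  intro a b k l
  fin_cases a <;> fin_cases b <;> fin_cases k <;> fin_cases l <;>
    simp only [Fin.zero_eta, Fin.mk_one, Fin.reduceFinMk, h0, h10, h20, h30, h21, h31, h32] <;>
    first
    | ring1
    | linear_combination hw
    | linear_combination -hw

theorem PM_plu (x y : Fin 4 → ℝ) : plu x y ⬝ᵥ PM.mulVec (plu x y) = 0 := by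
  rw [PM_eval]
  simp [sk, plu]
  ring

theorem exists_N {d} (hd : d ≤ 4) (M : Matrix (I d) (I d) ℝ)
    (h : ∀ x y, 0 ≤ plu x y ⬝ᵥ M.mulVec (plu x y)) :
    ∃ N : Matrix (I d) (I d) ℝ, (∀ x y, plu x y ⬝ᵥ N.mulVec (plu x y) = 0) ∧
      ∀ w, 0 ≤ w ⬝ᵥ (M + N).mulVec w := by
  rcases Nat.lt_or_ge d 4 with h3 | h3
  · refine ⟨0, fun x y => by simp, fun w => ?_⟩
    obtain ⟨x, y, rfl⟩ := lift_small (by omega) w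
    simpa using h x y
  · obtain rfl : d = 4 := by omega
    obtain ⟨l, hl⟩ := slemma (fun w : I 4 → ℝ => w ⬝ᵥ PM.mulVec w) (fun w => w ⬝ᵥ M.mulVec w) _ _
      (quad_expand PM) (quad_expand M)
      (fun w hw => by obtain ⟨x, y, rfl⟩ := lift_four w hw; exact h x y)
      (fun p => if p.1 = (0, 1) ∨ p.1 = (2, 3) then 1 else 0)
      (fun p => if p.1 = (0, 1) then 1 else if p.1 = (2, 3) then -1 else 0)
      (by simp only [PM_eval]; simp [sk]) (by simp only [PM_eval]; simp [sk])
    refine ⟨l • PM, fun x y => ?_, fun w => ?_⟩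
    · rw [Matrix.smul_mulVec, dotProduct_smul, PM_plu, smul_zero]
    · rw [Matrix.add_mulVec, Matrix.smul_mulVec, dotProduct_add, dotProduct_smul, smul_eq_mul]
      exact hl w

open scoped MatrixOrder Matrix.Norms.L2Operator in
theorem psd_sos {ι : Type*} [Fintype ι] [DecidableEq ι] (M : Matrix ι ι ℝ) (h : ∀ w, 0 ≤ w ⬝ᵥ M.mulVec w) :
    ∃ B : Matrix ι ι ℝ, ∀ w, w ⬝ᵥ M.mulVec w = ∑ p, (∑ q, B p q * w q) ^ 2 := by
  have hT : ∀ w, w ⬝ᵥ Mᵀ.mulVec w = w ⬝ᵥ M.mulVec w := fun w => by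
    rw [Matrix.mulVec_transpose, dotProduct_comm, ← Matrix.dotProduct_mulVec]
  have hq : ∀ w, w ⬝ᵥ ((1 / 2 : ℝ) • (M + Mᵀ)).mulVec w = w ⬝ᵥ M.mulVec w := fun w => by
    rw [Matrix.smul_mulVec, Matrix.add_mulVec, dotProduct_smul, dotProduct_add, hT, smul_eq_mul]
    ring
  have hP : ((1 / 2 : ℝ) • (M + Mᵀ)).PosSemidef := by
    refine Matrix.PosSemidef.of_dotProduct_mulVec_nonneg ?_ ?_
    · ext i j
      simp only [Matrix.conjTranspose_apply, Matrix.smul_apply, Matrix.add_apply, Matrix.transpose_apply, star_trivial, add_comm]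
    · intro w
      rw [star_trivial, hq]; exact h w
  obtain ⟨B, hB⟩ := CStarAlgebra.nonneg_iff_eq_star_mul_self.1 hP.nonneg
  rw [Matrix.star_eq_conjTranspose] at hB
  refine ⟨B, fun w => ?_⟩
  rw [← hq, hB, ← Matrix.mulVec_mulVec, Matrix.dotProduct_mulVec, Matrix.conjTranspose_eq_transpose_of_trivial,
    Matrix.vecMul_transpose]
  simp [dotProduct, Matrix.mulVec, sq]


theorem bilin_anti {d} (g : (Fin d → ℝ) → (Fin d → ℝ) → ℝ)
    (hadd : ∀ x x' y, g (x + x') y = g x y + g x' y)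
    (hsmul : ∀ (r : ℝ) x y, g (r • x) y = r * g x y)
    (hanti : ∀ x y, g x y = - g y x) (x y : Fin d → ℝ) :
    g x y = ∑ p : I d, g (Pi.single p.1.1 1) (Pi.single p.1.2 1) * plu x y p := by
  let L : (Fin d → ℝ) →ₗ[ℝ] (Fin d → ℝ) →ₗ[ℝ] ℝ := LinearMap.mk₂ ℝ g hadd hsmul
    (fun m n n' => by rw [hanti, hadd, hanti n, hanti n']; ring)
    (fun r m n => by rw [hanti, hsmul, hanti n, smul_eq_mul]; ring)
  have hL : ∀ x y, g x y = L x y := fun _ _ => rfl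
  rw [← antisum (fun i j => g (Pi.single i 1) (Pi.single j 1)) (fun _ _ => hanti _ _)]
  have hx : ∀ x : Fin d → ℝ, x = ∑ i, x i • (Pi.single i (1 : ℝ) : Fin d → ℝ) := fun x => by
    simpa using pi_eq_sum_univ' x
  simp only [hL]
  conv_lhs => rw [hx x, hx y]
  simp only [map_sum, LinearMap.sum_apply, map_smul, LinearMap.smul_apply, smul_eq_mul, Finset.mul_sum]
  rw [Finset.sum_comm]
  refine Finset.sum_congr rfl fun i _ => Finset.sum_congr rfl fun j _ => ?_
  ring

/-- the multilinear core -/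
theorem core_S {d} (hd : d ≤ 4) (S : (Fin d → ℝ) → (Fin d → ℝ) → (Fin d → ℝ) → (Fin d → ℝ) → ℝ)
    (h12 : ∀ x z y w, S x z y w = S z x y w) (h34 : ∀ x z y w, S x z y w = S x z w y)
    (a1 : ∀ x x' z y w, S (x + x') z y w = S x z y w + S x' z y w)
    (s1 : ∀ (r : ℝ) x z y w, S (r • x) z y w = r * S x z y w)
    (a3 : ∀ x z y y' w, S x z (y + y') w = S x z y w + S x z y' w)
    (s3 : ∀ (r : ℝ) x z y w, S x z (r • y) w = r * S x z y w)
    (hn : ∀ x y, 0 ≤ S x x y y) (h0 : ∀ x, S x x x x = 0) :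
    ∃ A : Fin (d.choose 2) → Matrix (Fin d) (Fin d) ℝ, (∀ p, (A p)ᵀ = -(A p)) ∧
      ∀ x y, S x x y y = ∑ p, (y ⬝ᵥ (A p).mulVec x) ^ 2 := by
  have a2 : ∀ x z z' y w, S x (z + z') y w = S x z y w + S x z' y w := fun x z z' y w => by
    rw [h12, a1, h12 z, h12 z']
  have a4 : ∀ x z y w w', S x z y (w + w') = S x z y w + S x z y w' := fun x z y w w' => by
    rw [h34, a3, h34 _ _ w, h34 _ _ w']
  have s4 : ∀ (r : ℝ) x z y w, S x z y (r • w) = r * S x z y w := fun r x z y w => by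
    rw [h34, s3, h34]
  have hz : ∀ x w, S x x x w = 0 := by
    intro x w
    have : ∀ t : ℝ, 0 ≤ S x x w w * (t * t) + (2 * S x x x w) * t + 0 := by
      intro t
      have := hn x (x + t • w)
      simp only [a3, a4, s3, s4, h0] at this
      rw [h34 x x w x] at this
      linarith
    have := discrim_le_zero this
    unfold discrim at this
    nlinarith [sq_nonneg (S x x x w)]
  have cyc : ∀ x y z w, S x y z w + S y z x w + S z x y w = 0 := by
    intro x y z w
    have e := hz (x + y + z) w
    have e1 := hz (x + y) w
    have e2 := hz (y + z) w
    have e3 := hz (x + z) w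
    simp only [a1, a2, a3, hz] at e e1 e2 e3
    linarith [h12 x y z w, h12 y z x w, h12 z x y w]
  obtain ⟨F, hF⟩ : ∃ F : (Fin d → ℝ) → (Fin d → ℝ) → (Fin d → ℝ) → (Fin d → ℝ) → ℝ,
    ∀ x y z w, F x y z w = 2 / 3 * (S x z y w - S x w y z) := ⟨_, fun _ _ _ _ => rfl⟩
  have F1 : ∀ x y z w, F x y z w = - F y x z w := by
    intro x y z w
    simp only [hF]
    linarith [cyc x z y w, cyc x w y z, h12 x z y w, h12 z y x w, h12 w y x z, h34 y x z w]
  have F2 : ∀ x y z w, F x y z w = - F x y w z := by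
    intro x y z w
    simp only [hF]
    ring
  have FS : ∀ x y, S x x y y = F x y x y := by
    intro x y
    rw [hF]
    linarith [cyc x x y y, h12 x y x y, h34 x y x y]
  let M : Matrix (I d) (I d) ℝ := fun p q =>
    F (Pi.single p.1.1 1) (Pi.single p.1.2 1) (Pi.single q.1.1 1) (Pi.single q.1.2 1)
  have hM : ∀ x y, S x x y y = plu x y ⬝ᵥ M.mulVec (plu x y) := by
    intro x y
    rw [FS, bilin_anti (fun u v => F u v x y) (fun u u' v => by simp only [hF, a1]; ring)
      (fun r u v => by simp only [hF, s1]; ring) (fun u v => F1 u v x y)]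
    simp only [dotProduct, Matrix.mulVec]
    refine Finset.sum_congr rfl fun p _ => ?_
    rw [bilin_anti (fun u v => F (Pi.single p.1.1 1) (Pi.single p.1.2 1) u v)
      (fun u u' v => by simp only [hF, a2, a4]; ring)
      (fun r u v => by simp only [hF, h12 _ (r • u), s1, s4, h12 u]; ring) (fun u v => F2 _ _ u v),
      mul_comm]
  obtain ⟨N, hN0, hN⟩ := exists_N hd M (fun x y => by rw [← hM]; exact hn x y)
  obtain ⟨B, hB⟩ := psd_sos (M + N) hN
  let e : Fin (d.choose 2) ≃ I d := (Fintype.equivFinOfCardEq (card_I d hd)).symm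
  refine ⟨fun p => Matrix.of (sk (B (e p))), fun p => ?_, fun x y => ?_⟩
  · ext i j
    simpa using sk_skew _ j i
  · have : S x x y y = plu x y ⬝ᵥ (M + N).mulVec (plu x y) := by
      rw [Matrix.add_mulVec, dotProduct_add, hN0, add_zero, hM]
    rw [this, hB, ← e.sum_comp]
    refine Finset.sum_congr rfl fun p _ => ?_
    have h1 : y ⬝ᵥ (Matrix.of (sk (B (e p)))).mulVec x = - ∑ q, B (e p) q * plu x y q := by
      have := antisum _ (sk_skew (B (e p))) y x
      simp only [sk_sub] at this
      rw [← Finset.sum_neg_distrib]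
      trans ∑ q, B (e p) q * plu y x q
      · rw [← this]
        simp only [dotProduct, Matrix.mulVec, Finset.mul_sum, Matrix.of_apply]
        exact Finset.sum_congr rfl fun i _ => Finset.sum_congr rfl fun j _ => by ring
      · exact Finset.sum_congr rfl fun q _ => by simp only [plu]; ring
    rw [h1, neg_sq]

theorem core {d} (hd : d ≤ 4) (BQ : (Fin d → ℝ) → (Fin d → ℝ) → ℝ)
    (hx : ∀ y, IsQ d (fun x => BQ x y)) (hy : ∀ x, IsQ d (fun y => BQ x y))
    (hn : ∀ x y, 0 ≤ BQ x y) (h0 : ∀ x, BQ x x = 0) :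
    ∃ A : Fin (d.choose 2) → Matrix (Fin d) (Fin d) ℝ, (∀ p, (A p)ᵀ = -(A p)) ∧
      ∀ x y, BQ x y = ∑ p, (y ⬝ᵥ (A p).mulVec x) ^ 2 := by
  let E : Fin d → Fin d → ℝ := fun k => Pi.single k 1
  have hC : ∀ k l, IsQ d (fun x => (1 / 2) * (BQ x (E k + E l) + (-1) * (BQ x (E k) + BQ x (E l)))) :=
    fun k l => IsQ.smul _ ((hx _).add (IsQ.smul _ ((hx _).add (hx _))))
  choose N hN using hC
  let U : (Fin d → ℝ) → (Fin d → ℝ) → (Fin d → ℝ) → (Fin d → ℝ) → ℝ := fun x z y w =>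
    ∑ k, ∑ l, (x ⬝ᵥ (N k l).mulVec z) * (y k * w l)
  have hU : ∀ x y, BQ x y = U x x y y := by
    intro x y
    obtain ⟨M, hM⟩ := hy x
    simp only at hM
    have h1 : ∀ k l, x ⬝ᵥ (N k l).mulVec x = (1 / 2) * (M k l + M l k) := by
      intro k l
      rw [← hN]
      simp only [hM, E, Matrix.mulVec_add, dotProduct_add, add_dotProduct, Matrix.mulVec_single_one,
        single_one_dotProduct, Matrix.col_apply]
      ring
    simp only [U, h1]
    have h2 : y ⬝ᵥ M.mulVec y = ∑ k, ∑ l, M k l * (y k * y l) := by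
      simp only [dotProduct, Matrix.mulVec, Finset.mul_sum]
      exact Finset.sum_congr rfl fun i _ => Finset.sum_congr rfl fun j _ => by ring
    have h3 : ∑ k, ∑ l, M l k * (y k * y l) = ∑ k, ∑ l, M k l * (y k * y l) := by
      rw [Finset.sum_comm]
      exact Finset.sum_congr rfl fun i _ => Finset.sum_congr rfl fun j _ => by ring
    rw [hM, h2]
    simp only [mul_assoc, add_mul, ← Finset.mul_sum, Finset.sum_add_distrib, h3]
    ring
  have a1 : ∀ x x' z y w, U (x + x') z y w = U x z y w + U x' z y w := fun x x' z y w => by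
    simp only [U, add_dotProduct, add_mul, Finset.sum_add_distrib]
  have a2 : ∀ x z z' y w, U x (z + z') y w = U x z y w + U x z' y w := fun x z z' y w => by
    simp only [U, Matrix.mulVec_add, dotProduct_add, add_mul, Finset.sum_add_distrib]
  have a3 : ∀ x z y y' w, U x z (y + y') w = U x z y w + U x z y' w := fun x z y y' w => by
    simp only [U, Pi.add_apply, add_mul, mul_add, Finset.sum_add_distrib]
  have a4 : ∀ x z y w w', U x z y (w + w') = U x z y w + U x z y w' := fun x z y w w' => by
    simp only [U, Pi.add_apply, mul_add, Finset.sum_add_distrib]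
  have s1 : ∀ (r : ℝ) x z y w, U (r • x) z y w = r * U x z y w := fun r x z y w => by
    simp only [U, smul_dotProduct, smul_eq_mul, Finset.mul_sum, mul_assoc]
  have s2 : ∀ (r : ℝ) x z y w, U x (r • z) y w = r * U x z y w := fun r x z y w => by
    simp only [U, Matrix.mulVec_smul, dotProduct_smul, smul_eq_mul, Finset.mul_sum, mul_assoc]
  have s3 : ∀ (r : ℝ) x z y w, U x z (r • y) w = r * U x z y w := fun r x z y w => by
    simp only [U, Pi.smul_apply, smul_eq_mul, Finset.mul_sum]
    exact Finset.sum_congr rfl fun i _ => Finset.sum_congr rfl fun j _ => by ring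
  have s4 : ∀ (r : ℝ) x z y w, U x z y (r • w) = r * U x z y w := fun r x z y w => by
    simp only [U, Pi.smul_apply, smul_eq_mul, Finset.mul_sum]
    exact Finset.sum_congr rfl fun i _ => Finset.sum_congr rfl fun j _ => by ring
  clear_value U
  have hU' : ∀ x y, BQ x y = (U x x y y + U x x y y + U x x y y + U x x y y) / 4 := fun x y => by
    rw [hU]; ring
  obtain ⟨A, hA, hA'⟩ := core_S hd
    (fun x z y w => (U x z y w + U z x y w + U x z w y + U z x w y) / 4)
    (fun x z y w => by ring) (fun x z y w => by ring)
    (fun x x' z y w => by simp only [a1, a2]; ring)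
    (fun r x z y w => by simp only [s1, s2]; ring)
    (fun x z y y' w => by simp only [a3, a4]; ring)
    (fun r x z y w => by simp only [s3, s4]; ring)
    (fun x y => by simp only [← hU']; exact hn x y)
    (fun x => by simp only [← hU']; exact h0 x)
  exact ⟨A, hA, fun x y => by rw [hU', ← hA' x y]⟩

theorem sym_ext {d} (M N : Matrix (Fin d) (Fin d) ℝ) (hM : M.IsSymm) (hN : N.IsSymm)
    (h : ∀ y, y ⬝ᵥ M.mulVec y = y ⬝ᵥ N.mulVec y) : M = N := by
  ext i j
  have h1 := h (Pi.single i 1)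
  have h2 := h (Pi.single j 1)
  have h3 := h (Pi.single i 1 + Pi.single j 1)
  simp only [Matrix.mulVec_add, dotProduct_add, add_dotProduct, Matrix.mulVec_single_one,
        single_one_dotProduct, Matrix.col_apply] at h1 h2 h3
  linarith [hM.apply i j, hN.apply i j]

end BQF

/-- For `1 ≤ d ≤ 4`: every nonnegative biquadratic form in `d+d` variables
vanishing on the diagonal is a sum of squares of polynomials; equivalently, every
`c : ℝ^d → S^d` with homogeneous degree-2 polynomial entries such that `c(x)` is positive
semidefinite for all `x` and `c(x) x = 0` for all `x` can be written as
`c(x) = ∑_{p=1}^m A_p x xᵀ A_pᵀ` with `m = choose d 2` skew-symmetric matrices `A_p`. -/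
theorem stmt8 (d : ℕ) (hd1 : 1 ≤ d) (hd4 : d ≤ 4) :
    -- every nonnegative biquadratic form vanishing on the diagonal is a sum of squares
    (∀ BQ : (Fin d → ℝ) → (Fin d → ℝ) → ℝ,
      (∀ y : Fin d → ℝ, ∃ M : Matrix (Fin d) (Fin d) ℝ, ∀ x, BQ x y = x ⬝ᵥ M.mulVec x) →
      (∀ x : Fin d → ℝ, ∃ M : Matrix (Fin d) (Fin d) ℝ, ∀ y, BQ x y = y ⬝ᵥ M.mulVec y) →
      (∀ x y, 0 ≤ BQ x y) → (∀ x, BQ x x = 0) →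
      ∃ (n : ℕ) (f : Fin n → MvPolynomial (Fin d ⊕ Fin d) ℝ),
        ∀ x y : Fin d → ℝ,
          BQ x y = ∑ k, (MvPolynomial.eval (Sum.elim x y) (f k)) ^ 2) ∧
    -- equivalently, every `c ∈ C_+` has the representation `∑_p A_p x xᵀ A_pᵀ`
    (∀ c : (Fin d → ℝ) → Matrix (Fin d) (Fin d) ℝ,
      (∀ x, (c x).IsSymm) →
      (∀ i j, IsHomPolyFun d 2 (fun x => c x i j)) →
      (∀ x, ∀ y : Fin d → ℝ, 0 ≤ y ⬝ᵥ (c x).mulVec y) →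
      (∀ x, (c x).mulVec x = 0) →
      ∃ A : Fin (d.choose 2) → Matrix (Fin d) (Fin d) ℝ,
        (∀ p, (A p)ᵀ = -(A p)) ∧
        ∀ x, c x = ∑ p, A p * Matrix.vecMulVec x x * (A p)ᵀ) := by
  refine ⟨fun BQ hx hy hn h0 => ?_, fun c hs hc hn h0 => ?_⟩
  · obtain ⟨A, -, hA⟩ := BQF.core hd4 BQ hx hy hn h0
    refine ⟨_, fun p => ∑ i, ∑ j, MvPolynomial.X (Sum.inr i) *
      (MvPolynomial.C (A p i j) * MvPolynomial.X (Sum.inl j)), fun x y => ?_⟩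
    rw [hA]
    simp [dotProduct, Matrix.mulVec, Finset.mul_sum]
  · obtain ⟨A, hA, hA'⟩ := BQF.core hd4 (fun x y => y ⬝ᵥ (c x).mulVec y)
      (fun y => by
        simp only [dotProduct, Matrix.mulVec, Finset.mul_sum]
        refine BQF.isQ_sum _ _ fun i _ => BQF.isQ_sum _ _ fun j _ => ?_
        have := BQF.IsQ.smul (y i * y j) (BQF.isQ_of_hom (hc i j))
        convert this using 2
        ring)
      (fun x => ⟨c x, fun y => rfl⟩) hn (fun x => by simp [h0])
    refine ⟨A, hA, fun x => ?_⟩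
    have h1 : ∀ p, A p * Matrix.vecMulVec x x * (A p)ᵀ =
        Matrix.vecMulVec ((A p).mulVec x) ((A p).mulVec x) := fun p => by
      rw [Matrix.mul_vecMulVec, Matrix.vecMulVec_mul, Matrix.vecMul_transpose]
    simp only [h1]
    refine BQF.sym_ext _ _ (hs x) ?_ fun y => ?_
    · ext i j
      simp only [Matrix.transpose_apply, Matrix.sum_apply, Matrix.vecMulVec_apply]
      exact Finset.sum_congr rfl fun p _ => mul_comm _ _
    · rw [hA' x y, Matrix.sum_mulVec, dotProduct_sum]
      refine Finset.sum_congr rfl fun p _ => ?_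
      rw [Matrix.vecMulVec_mulVec, dotProduct_smul, dotProduct_comm _ y]
      simp [sq]
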